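/- arXiv:2008.10048 — 8 statements merged into one kernel-verified Lean document; each statement's English description precedes it below -/
import Mathlib

section
/- Quadratic majorization of super-Gaussian contrast functions: for all r > 0 and r₀ > 0, G(r) ≤ G′(r₀)·r²/(2r₀) + (G(r₀) − (r₀/2)·G′(r₀)), with equality when r = r₀. -/
/-!
The parabola `q(r) = G' r₀ * r ^ 2 / (2 * r₀) + (G r₀ - r₀ / 2 * G' r₀)` touches `G` at `r₀`, and
`G' r - q' r = r * (G' r / r - G' r₀ / r₀)` is nonnegative for `r ≤ r₀` and nonpositive for
`r₀ ≤ r`, so `G - q` attains its maximum `0` at `r₀`. Any `g`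
with `g'` positive and `G' / g'` antitone can play the role of `r ^ 2 / 2`.
-/

section FirstDerivativeTest

variable {s : Set ℝ} {f f' g g' : ℝ → ℝ} {a x : ℝ}

theorem isMaxOn_of_hasDerivWithinAt_nonneg_of_nonpos (hs : Convex ℝ s) (ha : a ∈ s)
    (hf : ∀ x ∈ s, HasDerivWithinAt f (f' x) s x)
    (hleft : ∀ x ∈ s, x < a → 0 ≤ f' x) (hright : ∀ x ∈ s, a < x → f' x ≤ 0) :
    IsMaxOn f s a := by
  have hcont : ContinuousOn f s := fun x hx => (hf x hx).continuousWithinAt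
  have hderiv : ∀ t, ∀ x ∈ interior (s ∩ t),
      HasDerivWithinAt f (f' x) (interior (s ∩ t)) x := fun t x hx =>
    have hsub : interior (s ∩ t) ⊆ s := interior_subset.trans Set.inter_subset_left
    (hf x (hsub hx)).mono hsub
  have hmono : MonotoneOn f (s ∩ Set.Iic a) := by
    refine monotoneOn_of_hasDerivWithinAt_nonneg (hs.inter (convex_Iic a))
      (hcont.mono Set.inter_subset_left) (hderiv _) fun x hx => ?_
    rw [interior_inter, interior_Iic] at hx
    exact hleft x (interior_subset hx.1) hx.2
  have hanti : AntitoneOn f (s ∩ Set.Ici a) := by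
    refine antitoneOn_of_hasDerivWithinAt_nonpos (hs.inter (convex_Ici a))
      (hcont.mono Set.inter_subset_left) (hderiv _) fun x hx => ?_
    rw [interior_inter, interior_Ici] at hx
    exact hright x (interior_subset hx.1) hx.2
  intro x hx
  rcases le_total x a with hxa | hax
  · exact hmono ⟨hx, hxa⟩ ⟨ha, Set.self_mem_Iic⟩ hxa
  · exact hanti ⟨ha, Set.self_mem_Ici⟩ ⟨hx, hax⟩ hax

theorem le_add_deriv_ratio_mul_sub_of_antitoneOn (hs : Convex ℝ s)
    (hf : ∀ x ∈ s, HasDerivWithinAt f (f' x) s x) (hg : ∀ x ∈ s, HasDerivWithinAt g (g' x) s x)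
    (hg' : ∀ x ∈ s, 0 < g' x) (hratio : AntitoneOn (fun x => f' x / g' x) s)
    (ha : a ∈ s) (hx : x ∈ s) :
    f x ≤ f a + f' a / g' a * (g x - g a) := by
  have hmax : IsMaxOn (fun y => f y - f' a / g' a * g y) s a := by
    refine isMaxOn_of_hasDerivWithinAt_nonneg_of_nonpos hs ha
      (fun y hy => (hf y hy).sub ((hg y hy).const_mul _)) (fun y hy hya => ?_) fun y hy hay => ?_
    · exact sub_nonneg.2 ((le_div_iff₀ (hg' y hy)).1 (hratio hy ha hya.le))
    · exact sub_nonpos.2 ((div_le_iff₀ (hg' y hy)).1 (hratio ha hy hay.le))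
  have hle : f x - f' a / g' a * g x ≤ f a - f' a / g' a * g a := hmax hx
  linarith

end FirstDerivativeTest

theorem hasDerivAt_sq_div_two (x : ℝ) : HasDerivAt (fun y : ℝ => y ^ 2 / 2) x x := by
  simpa using (hasDerivAt_pow 2 x).div_const 2

/-- Quadratic majorization of spherical super-Gaussian contrast functions:
if `G : ℝ → ℝ` has derivative `G'` on `(0,∞)`, and `r ↦ G' r / r` is continuous
and monotonically non-increasing on `(0,∞)`, then for all `r > 0` and `r₀ > 0`,
`G r ≤ G' r₀ * r ^ 2 / (2 * r₀) + (G r₀ - r₀ / 2 * G' r₀)`, with equality when `r = r₀`. -/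
theorem superGaussian_quadratic_majorization
    (G G' : ℝ → ℝ)
    (hderiv : ∀ r : ℝ, 0 < r → HasDerivAt G (G' r) r)
    (hcont : ContinuousOn (fun r => G' r / r) (Set.Ioi (0 : ℝ)))
    (hantitone : AntitoneOn (fun r => G' r / r) (Set.Ioi (0 : ℝ))) :
    ∀ r : ℝ, 0 < r → ∀ r₀ : ℝ, 0 < r₀ →
      (G r ≤ G' r₀ * r ^ 2 / (2 * r₀) + (G r₀ - r₀ / 2 * G' r₀)) ∧
      (r = r₀ → G r = G' r₀ * r ^ 2 / (2 * r₀) + (G r₀ - r₀ / 2 * G' r₀)) := by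
  intro r hr r₀ hr₀
  have hparabola : G' r₀ * r ^ 2 / (2 * r₀) + (G r₀ - r₀ / 2 * G' r₀) =
      G r₀ + G' r₀ / r₀ * (r ^ 2 / 2 - r₀ ^ 2 / 2) := by
    field_simp
    ring
  rw [hparabola]
  constructor
  · exact le_add_deriv_ratio_mul_sub_of_antitoneOn (convex_Ioi 0)
      (fun x hx => (hderiv x hx).hasDerivWithinAt)
      (fun x _ => (hasDerivAt_sq_div_two x).hasDerivWithinAt) (fun _ hx => hx) hantitone hr₀ hr
  · rintro rfl
    ring
end

section
/- Global minimizer of the LQPQM in the general case (Theorem 3): suppose U v ≠ 0, and let λ* ∈ ℝ satisfy λ* > z, λ*·I − U positive definite, and λ* = (λ*)² · v^H (λ*·I − U)^{-1} U (λ*·I − U)^{-1} v + z. Then y* = (λ*·I − U)^{-1} U v satisfies F(y*) ≤ F(y) for every y ∈ ℂ^d with (y + v)^H U (y + v) + z > 0; moreover (y* + v)^H U (y* + v) + z = λ*. -/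
open Matrix ComplexOrder

/-!
Write `q y = (y + v)ᴴ U (y + v) + z`. Linearizing the logarithm at `lam` gives
`log (q y) ≤ log lam + (q y - lam) / lam`, with equality when `q y = lam`. Hence a point `x` with
`q x = lam` that minimizes `lam ‖y‖² - q y` also minimizes `‖y‖² - log (q y)`. Up to a constant,
`lam ‖y‖² - q y` is `yᴴ (lam - U) y - 2 Re (yᴴ U v)`, which is convex with stationary point
`x = (lam - U)⁻¹ U v`. Finally `x + v = lam (lam - U)⁻¹ v`, so the secular equation is exactly
`q x = lam`.
-/

theorem isMinOn_sub_log_of_isMinOn_mul_sub {α : Type*} {f g : α → ℝ} {s : Set α} {x : α} {c : ℝ}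
    (hc : 0 < c) (hgx : g x = c) (hmin : IsMinOn (fun y ↦ c * f y - g y) s x) :
    IsMinOn (fun y ↦ f y - Real.log (g y)) {y ∈ s | 0 < g y} x := by
  rintro y ⟨hys, hgy⟩
  have hlog : Real.log (g y) - Real.log c ≤ g y / c - 1 := by
    rw [← Real.log_div hgy.ne' hc.ne']
    exact Real.log_le_sub_one_of_pos (div_pos hgy hc)
  have hquot : g y / c - 1 ≤ f y - f x := by
    have hxy : c * f x - g x ≤ c * f y - g y := hmin hys
    rw [sub_le_iff_le_add, div_le_iff₀ hc]
    linarith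
  change f x - Real.log (g x) ≤ f y - Real.log (g y)
  rw [hgx]
  linarith

section Resolvent

variable {R n : Type*} [CommRing R] [DecidableEq n] {c : R} {U : Matrix n n R}

theorem isHermitian_of_isHermitian_smul_one_sub [StarRing R] (hc : IsSelfAdjoint c)
    (h : (c • 1 - U).IsHermitian) : U.IsHermitian := by
  have hscalar : (c • (1 : Matrix n n R)).IsHermitian := by
    rw [IsHermitian, conjTranspose_smul, conjTranspose_one, hc.star_eq]
  simpa only [sub_sub_cancel] using hscalar.sub h

theorem inv_smul_one_sub_mulVec_mulVec_add [Fintype n]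
    (h : IsUnit (c • 1 - U)) (v : n → R) :
    (c • 1 - U)⁻¹ *ᵥ (U *ᵥ v) + v = c • (c • 1 - U)⁻¹ *ᵥ v := by
  have hdet : IsUnit (c • 1 - U).det := (isUnit_iff_isUnit_det _).mp h
  calc (c • 1 - U)⁻¹ *ᵥ (U *ᵥ v) + v
      = (c • 1 - U)⁻¹ *ᵥ (U *ᵥ v) + (c • 1 - U)⁻¹ *ᵥ ((c • 1 - U) *ᵥ v) := by
        rw [mulVec_mulVec v _ (c • 1 - U), nonsing_inv_mul _ hdet, one_mulVec]
    _ = (c • 1 - U)⁻¹ *ᵥ (c • v) := by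
        rw [← mulVec_add, ← add_mulVec, add_sub_cancel, smul_mulVec, one_mulVec]
    _ = c • (c • 1 - U)⁻¹ *ᵥ v := mulVec_smul _ _ _

end Resolvent

section QuadraticForm

variable {𝕜 n : Type*} [RCLike 𝕜] [Fintype n] {A : Matrix n n 𝕜}

theorem re_star_dotProduct_comm (a b : n → 𝕜) :
    RCLike.re (star a ⬝ᵥ b) = RCLike.re (star b ⬝ᵥ a) := by
  rw [star_dotProduct, RCLike.star_def, RCLike.conj_re]

theorem re_star_add_dotProduct_mulVec_add (hA : A.IsHermitian) (a b : n → 𝕜) :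
    RCLike.re (star (a + b) ⬝ᵥ (A *ᵥ (a + b))) =
      RCLike.re (star a ⬝ᵥ (A *ᵥ a)) + 2 * RCLike.re (star a ⬝ᵥ (A *ᵥ b))
        + RCLike.re (star b ⬝ᵥ (A *ᵥ b)) := by
  have hcross : RCLike.re (star b ⬝ᵥ (A *ᵥ a)) = RCLike.re (star a ⬝ᵥ (A *ᵥ b)) := by
    rw [re_star_dotProduct_comm, star_mulVec, hA.eq, ← dotProduct_mulVec]
  simp only [star_add, mulVec_add, add_dotProduct, dotProduct_add, map_add, hcross]
  ring

theorem isMinOn_quadratic_of_mulVec_eq (hA : A.PosSemidef) {x b : n → 𝕜} (hx : A *ᵥ x = b) :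
    IsMinOn (fun y ↦ RCLike.re (star y ⬝ᵥ (A *ᵥ y)) - 2 * RCLike.re (star y ⬝ᵥ b))
      Set.univ x := by
  intro y _
  have hnonneg : 0 ≤ RCLike.re (star (y - x) ⬝ᵥ (A *ᵥ (y - x))) := hA.re_dotProduct_nonneg _
  have hexpand := re_star_add_dotProduct_mulVec_add hA.isHermitian (y - x) x
  have hcross : RCLike.re (star (y - x) ⬝ᵥ b) =
      RCLike.re (star y ⬝ᵥ b) - RCLike.re (star x ⬝ᵥ b) := by
    rw [star_sub, sub_dotProduct, map_sub]
  rw [sub_add_cancel, hx, hcross] at hexpand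
  change RCLike.re (star x ⬝ᵥ (A *ᵥ x)) - 2 * RCLike.re (star x ⬝ᵥ b) ≤
    RCLike.re (star y ⬝ᵥ (A *ᵥ y)) - 2 * RCLike.re (star y ⬝ᵥ b)
  rw [hx]
  linarith

end QuadraticForm

section LQPQM

variable {𝕜 n : Type*} [RCLike 𝕜] [Fintype n] {U : Matrix n n 𝕜} {lam : ℝ}

/-- The argument `(y + v)ᴴ U (y + v) + z` of the logarithm in the LQPQM objective. The real part
discards nothing when `U` is Hermitian. -/
def lqpqmLogArg (U : Matrix n n 𝕜) (v : n → 𝕜) (z : ℝ) (y : n → 𝕜) : ℝ :=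
  RCLike.re (star (y + v) ⬝ᵥ (U *ᵥ (y + v))) + z

/-- The LQPQM objective `‖y‖² - log ((y + v)ᴴ U (y + v) + z)`. The squared Euclidean norm is written
`yᴴ y` because `n → 𝕜` carries the sup norm. The objective is meaningful only where the argument of
the logarithm is positive. -/
noncomputable def lqpqmObjective (U : Matrix n n 𝕜) (v : n → 𝕜) (z : ℝ) (y : n → 𝕜) : ℝ :=
  RCLike.re (star y ⬝ᵥ y) - Real.log (lqpqmLogArg U v z y)

variable [DecidableEq n]

theorem mul_re_star_dotProduct_self_sub_lqpqmLogArg (hU : U.IsHermitian) (lam : ℝ) (v : n → 𝕜)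
    (z : ℝ) (y : n → 𝕜) :
    lam * RCLike.re (star y ⬝ᵥ y) - lqpqmLogArg U v z y =
      RCLike.re (star y ⬝ᵥ (((lam : 𝕜) • 1 - U) *ᵥ y)) - 2 * RCLike.re (star y ⬝ᵥ (U *ᵥ v))
        - lqpqmLogArg U v z 0 := by
  simp only [lqpqmLogArg, re_star_add_dotProduct_mulVec_add hU, zero_add, sub_mulVec, smul_mulVec,
    one_mulVec, dotProduct_sub, dotProduct_smul, smul_eq_mul, map_sub, RCLike.re_ofReal_mul]
  ring

theorem isMinOn_mul_re_star_dotProduct_self_sub_lqpqmLogArg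
    (hM : ((lam : 𝕜) • 1 - U).PosSemidef) {v x : n → 𝕜}
    (hx : ((lam : 𝕜) • 1 - U) *ᵥ x = U *ᵥ v) (z : ℝ) :
    IsMinOn (fun y ↦ lam * RCLike.re (star y ⬝ᵥ y) - lqpqmLogArg U v z y) Set.univ x := by
  have hU : U.IsHermitian :=
    isHermitian_of_isHermitian_smul_one_sub (RCLike.conj_ofReal lam) hM.isHermitian
  simp only [mul_re_star_dotProduct_self_sub_lqpqmLogArg hU]
  exact (isMinOn_quadratic_of_mulVec_eq hM hx).sub isMaxOn_const

theorem isMinOn_lqpqmObjective (hlam : 0 < lam) (hM : ((lam : 𝕜) • 1 - U).PosSemidef)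
    {v x : n → 𝕜} {z : ℝ} (hx : ((lam : 𝕜) • 1 - U) *ᵥ x = U *ᵥ v)
    (hval : lqpqmLogArg U v z x = lam) :
    IsMinOn (lqpqmObjective U v z) {y | 0 < lqpqmLogArg U v z y} x := by
  have hmin := isMinOn_sub_log_of_isMinOn_mul_sub hlam hval
    (isMinOn_mul_re_star_dotProduct_self_sub_lqpqmLogArg hM hx z)
  exact hmin.on_subset fun y hy ↦ ⟨Set.mem_univ y, hy⟩

theorem lqpqmLogArg_inv_smul_one_sub_mulVec (hM : ((lam : 𝕜) • 1 - U).IsHermitian)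
    (hunit : IsUnit ((lam : 𝕜) • 1 - U)) (v : n → 𝕜) (z : ℝ) :
    lqpqmLogArg U v z (((lam : 𝕜) • 1 - U)⁻¹ *ᵥ (U *ᵥ v)) =
      lam ^ 2 * RCLike.re (star v ⬝ᵥ (((lam : 𝕜) • 1 - U)⁻¹ *ᵥ
        (U *ᵥ (((lam : 𝕜) • 1 - U)⁻¹ *ᵥ v)))) + z := by
  have hadjoint (w : n → 𝕜) : star (((lam : 𝕜) • 1 - U)⁻¹ *ᵥ v) ⬝ᵥ w =
      star v ⬝ᵥ (((lam : 𝕜) • 1 - U)⁻¹ *ᵥ w) := by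
    rw [star_mulVec, hM.inv.eq, ← dotProduct_mulVec]
  rw [lqpqmLogArg, inv_smul_one_sub_mulVec_mulVec_add hunit, mulVec_smul, star_smul,
    smul_dotProduct, dotProduct_smul, hadjoint]
  simp only [RCLike.star_def, RCLike.conj_ofReal, smul_eq_mul, RCLike.re_ofReal_mul]
  ring

theorem lqpqm_global_minimizer_general_general {v : n → 𝕜} {z : ℝ} (hlam : 0 < lam)
    (hM : ((lam : 𝕜) • 1 - U).PosDef)
    (hsecular : lam = lam ^ 2 * RCLike.re (star v ⬝ᵥ (((lam : 𝕜) • 1 - U)⁻¹ *ᵥ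
      (U *ᵥ (((lam : 𝕜) • 1 - U)⁻¹ *ᵥ v)))) + z) :
    IsMinOn (lqpqmObjective U v z) {y | 0 < lqpqmLogArg U v z y}
        (((lam : 𝕜) • 1 - U)⁻¹ *ᵥ (U *ᵥ v)) ∧
      lqpqmLogArg U v z (((lam : 𝕜) • 1 - U)⁻¹ *ᵥ (U *ᵥ v)) = lam := by
  have hstationary :
      ((lam : 𝕜) • 1 - U) *ᵥ (((lam : 𝕜) • 1 - U)⁻¹ *ᵥ (U *ᵥ v)) = U *ᵥ v := by
    rw [mulVec_mulVec, mul_nonsing_inv _ ((isUnit_iff_isUnit_det _).mp hM.isUnit), one_mulVec]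
  have hval : lqpqmLogArg U v z (((lam : 𝕜) • 1 - U)⁻¹ *ᵥ (U *ᵥ v)) = lam :=
    (lqpqmLogArg_inv_smul_one_sub_mulVec hM.isHermitian hM.isUnit v z).trans hsecular.symm
  exact ⟨isMinOn_lqpqmObjective hlam hM.posSemidef hstationary hval, hval⟩

end LQPQM

/-- Global minimizer of the LQPQM in the general case (Theorem 3): if `U v ≠ 0` and
`λ* > z` is such that `λ* I - U` is positive definite and `λ*` satisfies the secular
equation `λ* = λ*² v^H (λ* I - U)⁻¹ U (λ* I - U)⁻¹ v + z`, then
`y* = (λ* I - U)⁻¹ U v` globally minimizes the LQPQM objective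
`F(y) = ‖y‖² - log((y+v)^H U (y+v) + z)` over all `y` where the logarithm argument is
positive, and moreover `(y* + v)^H U (y* + v) + z = λ*`. -/
theorem lqpqm_global_minimizer_general {d : ℕ} (hd : 1 ≤ d)
    (U : Matrix (Fin d) (Fin d) ℂ) (hU : U.PosSemidef)
    (v : Fin d → ℂ) (z : ℝ) (hz : 0 ≤ z)
    (hUv : U *ᵥ v ≠ 0)
    (lam : ℝ) (hlam_z : z < lam)
    (hlam_pd : ((lam : ℂ) • (1 : Matrix (Fin d) (Fin d) ℂ) - U).PosDef)
    (hlam_eq : lam =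
      lam ^ 2 *
        (star v ⬝ᵥ (((lam : ℂ) • (1 : Matrix (Fin d) (Fin d) ℂ) - U)⁻¹ *ᵥ
          (U *ᵥ (((lam : ℂ) • (1 : Matrix (Fin d) (Fin d) ℂ) - U)⁻¹ *ᵥ v)))).re + z) :
    letI ystar : Fin d → ℂ :=
      ((lam : ℂ) • (1 : Matrix (Fin d) (Fin d) ℂ) - U)⁻¹ *ᵥ (U *ᵥ v)
    (∀ y : Fin d → ℂ,
        0 < (star (y + v) ⬝ᵥ (U *ᵥ (y + v))).re + z →
        (star ystar ⬝ᵥ ystar).re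
            - Real.log ((star (ystar + v) ⬝ᵥ (U *ᵥ (ystar + v))).re + z)
          ≤ (star y ⬝ᵥ y).re - Real.log ((star (y + v) ⬝ᵥ (U *ᵥ (y + v))).re + z)) ∧
    (star (ystar + v) ⬝ᵥ (U *ᵥ (ystar + v))).re + z = lam := by
  have ⟨hmin, hval⟩ :=
    lqpqm_global_minimizer_general_general (hz.trans_lt hlam_z) hlam_pd hlam_eq
  exact ⟨fun y hy ↦ hmin hy, hval⟩
end

section
/- Special case of LQPQM with zero offset, first alternative (Theorem 2, case 1): if z > 0 and z ≥ λ_max, where λ_max is the largest eigenvalue of U, then F₀(0) = −log z and F₀(y) > −log z for every y ∈ ℂ^d with y ≠ 0; that is, y = 0 is the unique global minimizer of F₀. -/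
open Matrix ComplexOrder

/-! If every eigenvalue of `U` is at most `z`, then `y^H U y ≤ z ‖y‖²`, so that
`log (y^H U y + z) ≤ log z + log (1 + ‖y‖²) < log z + ‖y‖²` for `y ≠ 0`. -/

section Spectrum

variable {𝕜 n : Type*} [RCLike 𝕜] [Fintype n] [DecidableEq n] {U : Matrix n n 𝕜}

theorem mem_spectrum_real_iff_exists_mulVec_eq_smul {μ : ℝ} :
    μ ∈ spectrum ℝ U ↔ ∃ x : n → 𝕜, x ≠ 0 ∧ U *ᵥ x = (μ : 𝕜) • x := by
  rw [← spectrum.algebraMap_mem_iff 𝕜, ← spectrum_toLin',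
    ← Module.End.hasEigenvalue_iff_mem_spectrum]
  constructor
  · intro hμ
    obtain ⟨x, hx⟩ := hμ.exists_hasEigenvector
    exact ⟨x, hx.2, hx.apply_eq_smul⟩
  · rintro ⟨x, hx, hUx⟩
    exact Module.End.hasEigenvalue_of_hasEigenvector
      ⟨Module.End.mem_eigenspace_iff.2 hUx, hx⟩

open scoped MatrixOrder in
theorem re_dotProduct_mulVec_le_of_spectrum_le (hU : U.IsHermitian) {r : ℝ}
    (hUr : ∀ μ ∈ spectrum ℝ U, μ ≤ r) (y : n → 𝕜) :
    RCLike.re (star y ⬝ᵥ U *ᵥ y) ≤ r * RCLike.re (star y ⬝ᵥ y) := by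
  have hle : U ≤ algebraMap ℝ (Matrix n n 𝕜) r := le_algebraMap_of_spectrum_le hUr hU
  have hnonneg := (Matrix.le_iff.1 hle).re_dotProduct_nonneg y
  rwa [Algebra.algebraMap_eq_smul_one, sub_mulVec, smul_mulVec, one_mulVec, dotProduct_sub,
    dotProduct_smul, map_sub, RCLike.smul_re, sub_nonneg] at hnonneg

end Spectrum

theorem log_add_lt_add_log_of_le_mul {q t z : ℝ} (hz : 0 < z) (ht : 0 < t) (hqz : 0 < q + z)
    (hq : q ≤ z * t) : Real.log (q + z) < t + Real.log z :=
  calc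
    Real.log (q + z) ≤ Real.log ((t + 1) * z) := Real.log_le_log hqz (by linarith)
    _ = Real.log (t + 1) + Real.log z := Real.log_mul (by positivity) hz.ne'
    _ < t + Real.log z := by
      linarith [Real.log_lt_sub_one_of_pos (x := t + 1) (by positivity) (by linarith)]

/-- The objective `F₀(y) = ‖y‖² - log (y^H U y + z)` of the LQPQM with zero offset. It is meaningful
where `0 < y^H U y + z`; elsewhere `Real.log` takes a junk value. The real part makes the quadratic
form real-valued and discards nothing when `U` is Hermitian. -/
noncomputable def zeroOffsetObjective {𝕜 n : Type*} [RCLike 𝕜] [Fintype n] (U : Matrix n n 𝕜)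
    (z : ℝ) (y : n → 𝕜) : ℝ :=
  RCLike.re (star y ⬝ᵥ y) - Real.log (RCLike.re (star y ⬝ᵥ U *ᵥ y) + z)

theorem lqpqm_zero_offset_case1_general {𝕜 n : Type*} [RCLike 𝕜] [Fintype n] [DecidableEq n]
    {U : Matrix n n 𝕜} (hU : U.IsHermitian) {z : ℝ} (hz : 0 < z)
    (hUz : ∀ μ ∈ spectrum ℝ U, μ ≤ z) :
    zeroOffsetObjective U z 0 = -Real.log z ∧
      ∀ y : n → 𝕜, y ≠ 0 → 0 < RCLike.re (star y ⬝ᵥ U *ᵥ y) + z →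
        -Real.log z < zeroOffsetObjective U z y := by
  refine ⟨by simp [zeroOffsetObjective], fun y hy hdom => ?_⟩
  have hnorm : 0 < RCLike.re (star y ⬝ᵥ y) :=
    (RCLike.pos_iff.1 (dotProduct_star_self_pos_iff.2 hy)).1
  have hlog := log_add_lt_add_log_of_le_mul hz hnorm hdom
    (re_dotProduct_mulVec_le_of_spectrum_le hU hUz y)
  rw [zeroOffsetObjective]
  linarith

/-- Special case of LQPQM with zero offset, first alternative (Theorem 2, case 1):
if `z > 0` and `z ≥ λ_max`, the largest eigenvalue of `U`, then for
`F₀(y) = ‖y‖² - log(y^H U y + z)` one has `F₀(0) = -log z` and `F₀(y) > -log z` for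
every `y ≠ 0`; that is, `y = 0` is the unique global minimizer of `F₀`. -/
theorem lqpqm_zero_offset_case1 {d : ℕ} (hd : 1 ≤ d)
    (U : Matrix (Fin d) (Fin d) ℂ) (hU : U.PosSemidef)
    (z : ℝ) (hz : 0 < z)
    (lammax : ℝ)
    (hgreatest : IsGreatest
      {μ : ℝ | ∃ x : Fin d → ℂ, x ≠ 0 ∧ U *ᵥ x = (μ : ℂ) • x} lammax)
    (hzlam : lammax ≤ z) :
    ((star (0 : Fin d → ℂ) ⬝ᵥ (0 : Fin d → ℂ)).re
        - Real.log ((star (0 : Fin d → ℂ) ⬝ᵥ (U *ᵥ (0 : Fin d → ℂ))).re + z)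
      = -Real.log z) ∧
    (∀ y : Fin d → ℂ, y ≠ 0 →
      -Real.log z <
        (star y ⬝ᵥ y).re - Real.log ((star y ⬝ᵥ (U *ᵥ y)).re + z)) := by
  obtain ⟨h_zero, h_pos⟩ := lqpqm_zero_offset_case1_general hU.isHermitian hz fun _ hμ =>
    (hgreatest.2 (mem_spectrum_real_iff_exists_mulVec_eq_smul.1 hμ)).trans hzlam
  exact ⟨h_zero, fun y hy => h_pos y hy (add_pos_of_nonneg_of_pos (hU.re_dotProduct_nonneg y) hz)⟩
end

section
/- Objective value at a stationary point (Lemma 5): if λ > 0 is such that λ·I − U is invertible and y ∈ ℂ^d satisfies the first-order conditions U(y + v) = λ y and λ = (y + v)^H U (y + v) + z, then F(y) = 1 − v^H U (λ·I − U)^{-1} v − z/λ − log λ. -/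
open Matrix ComplexOrder

/-!
The first stationarity condition says `(λ I - U) y = U v`, and `U` commutes with `(λ I - U)⁻¹`, so
`y = U (λ I - U)⁻¹ v`. The quadratic form at `y + v` is then `λ (‖y‖² + vᴴ y)`, and equating this
with `λ - z` gives `‖y‖² = 1 - vᴴ y - z / λ`.
-/

section StationaryPoint

variable {n : Type*} [Fintype n]

section CommRing

variable [DecidableEq n] {R : Type*} [CommRing R]

theorem commute_nonsing_inv_right {A B : Matrix n n R} (h : Commute A B) : Commute A B⁻¹ := by
  simpa only [Matrix.zpow_neg_one] using Matrix.Commute.zpow_right h (-1)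

theorem mulVec_eq_iff_eq_nonsing_inv_mulVec {A : Matrix n n R} (hA : IsUnit A) {x b : n → R} :
    A *ᵥ x = b ↔ x = A⁻¹ *ᵥ b := by
  have hdet : IsUnit A.det := A.isUnit_iff_isUnit_det.mp hA
  constructor
  · rintro rfl
    rw [mulVec_mulVec, nonsing_inv_mul A hdet, one_mulVec]
  · rintro rfl
    rw [mulVec_mulVec, mul_nonsing_inv A hdet, one_mulVec]

theorem mulVec_add_eq_smul_iff {U : Matrix n n R} {c : R}
    (hinv : IsUnit (c • (1 : Matrix n n R) - U)) {y v : n → R} :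
    U *ᵥ (y + v) = c • y ↔ y = U *ᵥ ((c • (1 : Matrix n n R) - U)⁻¹ *ᵥ v) := by
  have hcomm : Commute U (c • (1 : Matrix n n R) - U) :=
    ((Commute.one_right U).smul_right c).sub_right (Commute.refl U)
  calc U *ᵥ (y + v) = c • y
      ↔ (c • (1 : Matrix n n R) - U) *ᵥ y = U *ᵥ v := by
        rw [mulVec_add, sub_mulVec, smul_mulVec, one_mulVec, sub_eq_iff_eq_add', eq_comm]
    _ ↔ y = (c • (1 : Matrix n n R) - U)⁻¹ *ᵥ (U *ᵥ v) :=
        mulVec_eq_iff_eq_nonsing_inv_mulVec hinv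
    _ ↔ y = U *ᵥ ((c • (1 : Matrix n n R) - U)⁻¹ *ᵥ v) := by
        rw [mulVec_mulVec, mulVec_mulVec, (commute_nonsing_inv_right hcomm).eq]

end CommRing

theorem star_add_dotProduct_mulVec_of_mulVec_add_eq_smul {R : Type*} [CommSemiring R] [StarRing R]
    {U : Matrix n n R} {c : R} {y v : n → R} (hy : U *ᵥ (y + v) = c • y) :
    star (y + v) ⬝ᵥ (U *ᵥ (y + v)) = c * (star y ⬝ᵥ y + star v ⬝ᵥ y) := by
  rw [hy, dotProduct_smul, star_add, add_dotProduct, smul_eq_mul]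

section RCLike

variable {𝕜 : Type*} [RCLike 𝕜]

theorem re_star_dotProduct_self_of_mulVec_add_eq_smul {U : Matrix n n 𝕜} {y v : n → 𝕜}
    {z lam : ℝ} (hlam : lam ≠ 0) (hy : U *ᵥ (y + v) = (lam : 𝕜) • y)
    (hquad : lam = RCLike.re (star (y + v) ⬝ᵥ (U *ᵥ (y + v))) + z) :
    RCLike.re (star y ⬝ᵥ y) = 1 - RCLike.re (star v ⬝ᵥ y) - z / lam := by
  rw [star_add_dotProduct_mulVec_of_mulVec_add_eq_smul hy, RCLike.re_ofReal_mul, map_add]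
    at hquad
  field_simp
  linarith

theorem lqpqm_objective_at_stationary_point_general [DecidableEq n] {U : Matrix n n 𝕜}
    {y v : n → 𝕜} {z lam : ℝ} (hlam : 0 < lam)
    (hinv : IsUnit ((lam : 𝕜) • (1 : Matrix n n 𝕜) - U))
    (hfoc1 : U *ᵥ (y + v) = (lam : 𝕜) • y)
    (hfoc2 : lam = RCLike.re (star (y + v) ⬝ᵥ (U *ᵥ (y + v))) + z) :
    RCLike.re (star y ⬝ᵥ y) - Real.log (RCLike.re (star (y + v) ⬝ᵥ (U *ᵥ (y + v))) + z)
      = 1 - RCLike.re (star v ⬝ᵥ (U *ᵥ (((lam : 𝕜) • (1 : Matrix n n 𝕜) - U)⁻¹ *ᵥ v)))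
        - z / lam - Real.log lam := by
  rw [← hfoc2, ← (mulVec_add_eq_smul_iff hinv).mp hfoc1,
    re_star_dotProduct_self_of_mulVec_add_eq_smul hlam.ne' hfoc1 hfoc2]

end RCLike

end StationaryPoint

/-- Objective value at a stationary point (Lemma 5): if `λ > 0`, `λ I - U` is
invertible, and `y` satisfies the first-order conditions `U(y+v) = λ y` and
`λ = (y+v)^H U (y+v) + z`, then the LQPQM objective
`F(y) = ‖y‖² - log((y+v)^H U (y+v) + z)` equals
`1 - v^H U (λ I - U)⁻¹ v - z/λ - log λ`. -/
theorem lqpqm_objective_at_stationary_point {d : ℕ} (hd : 1 ≤ d)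
    (U : Matrix (Fin d) (Fin d) ℂ) (hU : U.PosSemidef)
    (v : Fin d → ℂ) (z : ℝ) (hz : 0 ≤ z)
    (lam : ℝ) (hlam : 0 < lam)
    (hinv : IsUnit ((lam : ℂ) • (1 : Matrix (Fin d) (Fin d) ℂ) - U))
    (y : Fin d → ℂ)
    (hfoc1 : U *ᵥ (y + v) = (lam : ℂ) • y)
    (hfoc2 : lam = (star (y + v) ⬝ᵥ (U *ᵥ (y + v))).re + z) :
    (star y ⬝ᵥ y).re - Real.log ((star (y + v) ⬝ᵥ (U *ᵥ (y + v))).re + z)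
      = 1 - (star v ⬝ᵥ (U *ᵥ (((lam : ℂ) • (1 : Matrix (Fin d) (Fin d) ℂ) - U)⁻¹ *ᵥ v))).re
        - z / lam - Real.log lam := by
  exact lqpqm_objective_at_stationary_point_general hlam hinv hfoc1 hfoc2
end

section
/- Stationary points of the LQPQM satisfy the secular equation: if λ ∈ ℝ is such that λ·I − U is invertible and y ∈ ℂ^d satisfies U(y + v) = λ y and λ = (y + v)^H U (y + v) + z, then y = (λ·I − U)^{-1} U v and λ = λ² · v^H (λ·I − U)^{-1} U (λ·I − U)^{-1} v + z. -/
open Matrix ComplexOrder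

/-! Put `M = λ I - U`. The stationarity equation `U (y + v) = λ y` can be read in two ways: as
`M y = U v`, which determines `y`, and as `M (y + v) = λ v`, which makes the shifted point a
multiple of `M⁻¹ v`. Since `M⁻¹` is Hermitian, substituting `y + v = λ M⁻¹ v` into
`(y + v)ᴴ U (y + v)` yields `λ² vᴴ M⁻¹ U M⁻¹ v`. -/

theorem star_mulVec_dotProduct_of_isHermitian {n R : Type*} [Fintype n] [NonUnitalSemiring R]
    [StarRing R] {A : Matrix n n R} (hA : A.IsHermitian) (x w : n → R) :
    star (A *ᵥ x) ⬝ᵥ w = star x ⬝ᵥ (A *ᵥ w) := by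
  rw [star_mulVec, hA.eq, dotProduct_mulVec]

section StationarityEquation

variable {n R : Type*} [Fintype n] [DecidableEq n] [CommRing R]
  {U : Matrix n n R} {c : R} {v y : n → R}

theorem eq_inv_mulVec_of_isUnit {A : Matrix n n R} (hA : IsUnit A) {x b : n → R}
    (h : A *ᵥ x = b) : x = A⁻¹ *ᵥ b :=
  letI := hA.invertible
  (inv_mulVec_eq_vec h.symm).symm

theorem smul_one_sub_mulVec (c : R) (U : Matrix n n R) (x : n → R) :
    (c • (1 : Matrix n n R) - U) *ᵥ x = c • x - U *ᵥ x := by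
  rw [sub_mulVec, smul_mulVec, one_mulVec]

theorem eq_inv_mulVec_of_mulVec_add_eq_smul (hinv : IsUnit (c • (1 : Matrix n n R) - U))
    (h : U *ᵥ (y + v) = c • y) : y = (c • (1 : Matrix n n R) - U)⁻¹ *ᵥ (U *ᵥ v) := by
  refine eq_inv_mulVec_of_isUnit hinv ?_
  rw [smul_one_sub_mulVec, ← h, mulVec_add, add_sub_cancel_left]

theorem add_eq_smul_inv_mulVec_of_mulVec_add_eq_smul
    (hinv : IsUnit (c • (1 : Matrix n n R) - U)) (h : U *ᵥ (y + v) = c • y) :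
    y + v = c • ((c • (1 : Matrix n n R) - U)⁻¹ *ᵥ v) := by
  rw [← mulVec_smul]
  refine eq_inv_mulVec_of_isUnit hinv ?_
  rw [smul_one_sub_mulVec, h, smul_add, add_sub_cancel_left]

theorem star_add_dotProduct_mulVec_add_of_mulVec_add_eq_smul [StarRing R]
    (hU : U.IsHermitian) (hc : IsSelfAdjoint c)
    (hinv : IsUnit (c • (1 : Matrix n n R) - U)) (h : U *ᵥ (y + v) = c • y) :
    star (y + v) ⬝ᵥ (U *ᵥ (y + v)) =
      c ^ 2 * (star v ⬝ᵥ ((c • (1 : Matrix n n R) - U)⁻¹ *ᵥ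
        (U *ᵥ ((c • (1 : Matrix n n R) - U)⁻¹ *ᵥ v)))) := by
  have hM : (c • (1 : Matrix n n R) - U)⁻¹.IsHermitian := ((isHermitian_one.smul hc).sub hU).inv
  rw [add_eq_smul_inv_mulVec_of_mulVec_add_eq_smul hinv h, star_smul, hc.star_eq, mulVec_smul,
    smul_dotProduct, dotProduct_smul, star_mulVec_dotProduct_of_isHermitian hM, smul_eq_mul,
    smul_eq_mul, ← mul_assoc, ← sq]

end StationarityEquation

theorem lqpqm_stationary_secular_general {n 𝕜 : Type*} [Fintype n] [DecidableEq n] [RCLike 𝕜]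
    {U : Matrix n n 𝕜} (hU : U.IsHermitian) {v y : n → 𝕜} {z lam : ℝ}
    (hinv : IsUnit ((lam : 𝕜) • (1 : Matrix n n 𝕜) - U))
    (hfoc1 : U *ᵥ (y + v) = (lam : 𝕜) • y)
    (hfoc2 : lam = RCLike.re (star (y + v) ⬝ᵥ (U *ᵥ (y + v))) + z) :
    y = ((lam : 𝕜) • (1 : Matrix n n 𝕜) - U)⁻¹ *ᵥ (U *ᵥ v) ∧
    lam = lam ^ 2 *
        RCLike.re (star v ⬝ᵥ (((lam : 𝕜) • (1 : Matrix n n 𝕜) - U)⁻¹ *ᵥ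
          (U *ᵥ (((lam : 𝕜) • (1 : Matrix n n 𝕜) - U)⁻¹ *ᵥ v)))) + z := by
  refine ⟨eq_inv_mulVec_of_mulVec_add_eq_smul hinv hfoc1, ?_⟩
  have hlam : IsSelfAdjoint (lam : 𝕜) := RCLike.conj_ofReal lam
  rwa [star_add_dotProduct_mulVec_add_of_mulVec_add_eq_smul hU hlam hinv hfoc1,
    ← RCLike.ofReal_pow, RCLike.re_ofReal_mul] at hfoc2

/-- Stationary points of the LQPQM satisfy the secular equation: if `λ I - U` is
invertible and `y` satisfies `U(y+v) = λ y` and `λ = (y+v)^H U (y+v) + z`, then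
`y = (λ I - U)⁻¹ U v` and `λ = λ² v^H (λ I - U)⁻¹ U (λ I - U)⁻¹ v + z`. -/
theorem lqpqm_stationary_secular {d : ℕ} (hd : 1 ≤ d)
    (U : Matrix (Fin d) (Fin d) ℂ) (hU : U.PosSemidef)
    (v : Fin d → ℂ) (z : ℝ) (hz : 0 ≤ z)
    (lam : ℝ)
    (hinv : IsUnit ((lam : ℂ) • (1 : Matrix (Fin d) (Fin d) ℂ) - U))
    (y : Fin d → ℂ)
    (hfoc1 : U *ᵥ (y + v) = (lam : ℂ) • y)
    (hfoc2 : lam = (star (y + v) ⬝ᵥ (U *ᵥ (y + v))).re + z) :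
    y = ((lam : ℂ) • (1 : Matrix (Fin d) (Fin d) ℂ) - U)⁻¹ *ᵥ (U *ᵥ v) ∧
    lam = lam ^ 2 *
        (star v ⬝ᵥ (((lam : ℂ) • (1 : Matrix (Fin d) (Fin d) ℂ) - U)⁻¹ *ᵥ
          (U *ᵥ (((lam : ℂ) • (1 : Matrix (Fin d) (Fin d) ℂ) - U)⁻¹ *ᵥ v)))).re + z :=
  lqpqm_stationary_secular_general hU.isHermitian hinv hfoc1 hfoc2
end

section
/- At most two roots between consecutive poles (Lemma 6, parts 2 and 3): for every λ > 0 with λ ∉ {φ_m : m ∈ S}, f is twice differentiable at λ with f″(λ) = 2 Σ_{m∈S} c_m φ_m (2λ + φ_m)/(λ − φ_m)⁴ > 0; consequently, for any 0 ≤ a < b such that the open interval (a, b) contains no φ_m, the set {λ ∈ (a,b) : f(λ) = 0} has at most two elements. -/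
/-!
Each summand `c x² / (x - p)²` has second derivative `2 c p (2 x + p) / (x - p)⁴`, which is positive
as soon as `0 < c p` and `0 < 2 x + p`. Hence the secular function is strictly convex on every
pole-free interval on which all `2 x + φ m` are positive, and a strictly convex function of one
variable takes no value three times: at the middle point it would lie strictly below that value.
-/

open Set

theorem exists_lt_lt_of_two_lt_encard {α : Type*} [LinearOrder α] {s : Set α}
    (hs : 2 < s.encard) : ∃ x ∈ s, ∃ y ∈ s, ∃ z ∈ s, x < y ∧ y < z := by
  have three_le : ((3 : ℕ) : ℕ∞) ≤ s.encard := Order.add_one_le_of_lt hs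
  obtain ⟨t, hts, ht⟩ := exists_subset_encard_eq three_le
  lift t to Finset α using finite_of_encard_eq_coe ht
  have ht_card : t.card = 3 := by simpa only [encard_coe_eq_coe_finsetCard, Nat.cast_inj] using ht
  let e := t.orderEmbOfFin ht_card
  have he (i : Fin 3) : e i ∈ s := hts (t.orderEmbOfFin_mem ht_card i)
  exact ⟨e 0, he 0, e 1, he 1, e 2, he 2, e.strictMono (by decide), e.strictMono (by decide)⟩

theorem encard_setOf_eq_le_two_of_strictConvexOn {𝕜 β : Type*}
    [Field 𝕜] [LinearOrder 𝕜] [IsStrictOrderedRing 𝕜]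
    [AddCommMonoid β] [LinearOrder β] [IsOrderedAddMonoid β] [Module 𝕜 β] [PosSMulStrictMono 𝕜 β]
    {s : Set 𝕜} {f : 𝕜 → β} (hf : StrictConvexOn 𝕜 s f) (r : β) :
    {x | x ∈ s ∧ f x = r}.encard ≤ 2 := by
  by_contra! two_lt
  obtain ⟨x, ⟨hxs, hx⟩, y, ⟨-, hy⟩, z, ⟨hzs, hz⟩, hxy, hyz⟩ := exists_lt_lt_of_two_lt_encard two_lt
  have hxz : x < z := hxy.trans hyz
  have y_mem : y ∈ openSegment 𝕜 x z := by
    rw [openSegment_eq_Ioo hxz]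
    exact ⟨hxy, hyz⟩
  have := hf.lt_on_openSegment hxs hzs hxz.ne y_mem
  rw [hx, hy, hz, max_self] at this
  exact this.false

/-- The secular function `x² ∑ₘ cₘ / (x - φₘ)² - x + z` with poles `φ`, weights `c` and constant
term `z`. At a pole `x = φₘ`, the `m`-th summand takes the junk value `0`. -/
def secularFun {ι 𝕜 : Type*} [Fintype ι] [Field 𝕜] (φ c : ι → 𝕜) (z x : 𝕜) : 𝕜 :=
  x ^ 2 * ∑ m, c m / (x - φ m) ^ 2 - x + z

section Derivatives

variable {𝕜 : Type*} [NontriviallyNormedField 𝕜]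

theorem hasDerivAt_sq_mul_div_sub_sq (c : 𝕜) {p x : 𝕜} (hx : x ≠ p) :
    HasDerivAt (fun y => y ^ 2 * (c / (y - p) ^ 2)) (-2 * c * p * x / (x - p) ^ 3) x := by
  have hne : x - p ≠ 0 := sub_ne_zero.mpr hx
  have hden : HasDerivAt (fun y => (y - p) ^ 2) (2 * (x - p)) x := by
    simpa using ((hasDerivAt_id' x).sub_const p).fun_pow 2
  refine ((hasDerivAt_pow 2 x).fun_mul
    ((hasDerivAt_const x c).fun_div hden (pow_ne_zero 2 hne))).congr_deriv ?_
  push_cast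
  field_simp
  ring

theorem hasDerivAt_mul_div_sub_cube (c : 𝕜) {p x : 𝕜} (hx : x ≠ p) :
    HasDerivAt (fun y => -2 * c * p * y / (y - p) ^ 3)
      (2 * (c * p * (2 * x + p) / (x - p) ^ 4)) x := by
  have hne : x - p ≠ 0 := sub_ne_zero.mpr hx
  have hden : HasDerivAt (fun y => (y - p) ^ 3) (3 * (x - p) ^ 2) x := by
    simpa using ((hasDerivAt_id' x).sub_const p).fun_pow 3
  refine (((hasDerivAt_id' x).const_mul (-2 * c * p)).fun_div hden
    (pow_ne_zero 3 hne)).congr_deriv ?_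
  field_simp
  ring

variable {ι : Type*} [Fintype ι] {φ : ι → 𝕜} {x : 𝕜}

theorem hasDerivAt_secularFun (c : ι → 𝕜) (z : 𝕜) (hx : ∀ m, x ≠ φ m) :
    HasDerivAt (secularFun φ c z) (∑ m, -2 * c m * φ m * x / (x - φ m) ^ 3 - 1) x := by
  have hsum : HasDerivAt (fun y => y ^ 2 * ∑ m, c m / (y - φ m) ^ 2)
      (∑ m, -2 * c m * φ m * x / (x - φ m) ^ 3) x := by
    simp only [Finset.mul_sum]
    exact HasDerivAt.fun_sum fun m _ => hasDerivAt_sq_mul_div_sub_sq (c m) (hx m)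
  exact (hsum.fun_sub (hasDerivAt_id' x)).add_const z

theorem hasDerivAt_deriv_secularFun (c : ι → 𝕜) (z : 𝕜) (hx : ∀ m, x ≠ φ m) :
    HasDerivAt (deriv (secularFun φ c z))
      (2 * ∑ m, c m * φ m * (2 * x + φ m) / (x - φ m) ^ 4) x := by
  have off_poles : ∀ᶠ y in nhds x, ∀ m, y ≠ φ m :=
    Filter.eventually_all.mpr fun m => eventually_ne_nhds (hx m)
  have deriv_eq : deriv (secularFun φ c z) =ᶠ[nhds x]
      fun y => ∑ m, -2 * c m * φ m * y / (y - φ m) ^ 3 - 1 :=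
    off_poles.mono fun y hy => (hasDerivAt_secularFun c z hy).deriv
  rw [Finset.mul_sum]
  exact ((HasDerivAt.fun_sum fun m _ =>
    hasDerivAt_mul_div_sub_cube (c m) (hx m)).sub_const 1).congr_of_eventuallyEq deriv_eq

end Derivatives

theorem sum_mul_div_sub_pow_four_pos {ι 𝕜 : Type*} [Fintype ι] [Nonempty ι]
    [Field 𝕜] [LinearOrder 𝕜] [IsStrictOrderedRing 𝕜] {φ c : ι → 𝕜} {x : 𝕜}
    (hcφ : ∀ m, 0 < c m * φ m) (hx : ∀ m, x ≠ φ m) (hxφ : ∀ m, 0 < 2 * x + φ m) :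
    0 < ∑ m, c m * φ m * (2 * x + φ m) / (x - φ m) ^ 4 := by
  refine Finset.sum_pos (fun m _ => ?_) Finset.univ_nonempty
  have hden : 0 < (x - φ m) ^ 4 := Even.pow_pos (by decide) (sub_ne_zero.mpr (hx m))
  exact div_pos (mul_pos (hcφ m) (hxφ m)) hden

theorem strictConvexOn_secularFun {ι : Type*} [Fintype ι] [Nonempty ι] {φ c : ι → ℝ}
    (z : ℝ) {s : Set ℝ} (hs : Convex ℝ s)
    (hcφ : ∀ m, 0 < c m * φ m) (hφs : ∀ m, φ m ∉ s) (hsφ : ∀ x ∈ s, ∀ m, 0 < 2 * x + φ m) :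
    StrictConvexOn ℝ s (secularFun φ c z) := by
  have off_poles : ∀ x ∈ s, ∀ m, x ≠ φ m := fun x hx m => ne_of_mem_of_not_mem hx (hφs m)
  refine strictConvexOn_of_deriv2_pos' hs (fun x hx => ?_) fun x hx => ?_
  · exact (hasDerivAt_secularFun c z (off_poles x hx)).continuousAt.continuousWithinAt
  · have second_deriv : deriv^[2] (secularFun φ c z) x = _ :=
      (hasDerivAt_deriv_secularFun c z (off_poles x hx)).deriv
    rw [second_deriv]
    exact mul_pos two_pos (sum_mul_div_sub_pow_four_pos hcφ (off_poles x hx) (hsφ x hx))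

theorem secular_convex_between_poles_general {ι : Type*} [Fintype ι] [Nonempty ι]
    (φ c : ι → ℝ) (hcφ : ∀ m, 0 < c m * φ m) (z : ℝ) :
    (∀ x : ℝ, (∀ m, x ≠ φ m) →
      HasDerivAt (deriv (secularFun φ c z))
        (2 * ∑ m, c m * φ m * (2 * x + φ m) / (x - φ m) ^ 4) x ∧
      ((∀ m, 0 < 2 * x + φ m) →
        0 < 2 * ∑ m, c m * φ m * (2 * x + φ m) / (x - φ m) ^ 4)) ∧
    (∀ s : Set ℝ, Convex ℝ s → (∀ x ∈ s, ∀ m, 0 < 2 * x + φ m) → (∀ m, φ m ∉ s) →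
      {x | x ∈ s ∧ secularFun φ c z x = 0}.encard ≤ 2) :=
  ⟨fun _ hx => ⟨hasDerivAt_deriv_secularFun c z hx,
    fun hxφ => mul_pos two_pos (sum_mul_div_sub_pow_four_pos hcφ hx hxφ)⟩,
   fun _ hs hsφ hφs =>
    encard_setOf_eq_le_two_of_strictConvexOn (strictConvexOn_secularFun z hs hcφ hφs hsφ) 0⟩

/-- At most two roots of the secular function between consecutive poles
(Lemma 6, parts 2 and 3): for every `λ > 0` avoiding the poles, `f` is twice
differentiable at `λ` with
`f''(λ) = 2 Σ_m c_m φ_m (2λ + φ_m)/(λ - φ_m)⁴ > 0`; consequently, any open interval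
`(a, b)` with `0 ≤ a < b` containing no pole `φ_m` contains at most two roots of `f`. -/
theorem secular_convex_between_poles {ι : Type*} [Fintype ι] [Nonempty ι]
    (φ c : ι → ℝ) (hφ : ∀ m, 0 < φ m) (hc : ∀ m, 0 < c m)
    (z : ℝ) (hz : 0 ≤ z) :
    letI f : ℝ → ℝ := fun lam => lam ^ 2 * ∑ m, c m / (lam - φ m) ^ 2 - lam + z
    (∀ lam : ℝ, 0 < lam → (∀ m, lam ≠ φ m) →
        HasDerivAt (deriv f)
          (2 * ∑ m, c m * φ m * (2 * lam + φ m) / (lam - φ m) ^ 4) lam ∧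
        0 < 2 * ∑ m, c m * φ m * (2 * lam + φ m) / (lam - φ m) ^ 4) ∧
    (∀ a b : ℝ, 0 ≤ a → a < b → (∀ m, φ m ∉ Set.Ioo a b) →
        Set.encard {lam : ℝ | lam ∈ Set.Ioo a b ∧ f lam = 0} ≤ 2) := by
  have pos {x : ℝ} (hx : 0 < x) (m : ι) : 0 < 2 * x + φ m := by linarith [hφ m]
  obtain ⟨second_deriv, roots⟩ :=
    secular_convex_between_poles_general φ c (fun m => mul_pos (hc m) (hφ m)) z
  exact ⟨fun x hx hxφ => (second_deriv x hxφ).imp_right fun h => h (pos hx),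
    fun a b ha _ => roots (Ioo a b) (convex_Ioo a b) fun x hx => pos (ha.trans_lt hx.1)⟩
end

section
/- Monotonicity of the objective over roots within one pole-free interval (Lemma 7): if 0 < λ₁ ≤ λ₂, f(λ₁) = f(λ₂) = 0, and no φ_m lies in the closed interval [λ₁, λ₂], then g(λ₁) ≥ g(λ₂). -/
/-!
The objective `g` satisfies `g' = f / λ²`, where `f` is the secular function, so its critical points
are the roots of `f`. The increments of `g` obey a weighted trapezoid bound

  `g y - g x ≤ (y - x) / (x + y) * (x * g' x + y * g' y)`,

which can be checked summand by summand: it is an equality for `-z / λ`, it is the classical bound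
`2 (y - x) / (x + y) ≤ log (y / x)` for `-log λ`, and for `-c / (λ - p)` its defect is an explicit
multiple of `c * p * (y - x) ^ 3`. At two roots of `f` the right-hand side vanishes.
-/

section Trapezoid

theorem two_mul_sub_div_add_le_log_sub_log {x y : ℝ} (hx : 0 < x) (hxy : x ≤ y) :
    2 * (y - x) / (x + y) ≤ Real.log y - Real.log x := by
  have hy : 0 < y := hx.trans_le hxy
  have ratio_nonneg : 0 ≤ (y - x) / x := div_nonneg (sub_nonneg.2 hxy) hx.le
  have ratio_add_two : (y - x) / x + 2 = (x + y) / x := by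
    field_simp
    ring
  calc
    2 * (y - x) / (x + y) = 2 * ((y - x) / x) / ((y - x) / x + 2) := by
      rw [ratio_add_two]
      field_simp
    _ ≤ Real.log (1 + (y - x) / x) := Real.le_log_one_add_of_nonneg ratio_nonneg
    _ = Real.log (y / x) := by
      congr 1
      field_simp
      ring
    _ = Real.log y - Real.log x := Real.log_div hy.ne' hx.ne'

theorem div_sub_div_eq_trapezoid {K : Type*} [Field K] {x y : K} (hx : x ≠ 0) (hy : y ≠ 0)
    (hxy : x + y ≠ 0) (z : K) :
    z / x - z / y = (y - x) / (x + y) * (z / x + z / y) := by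
  field_simp
  ring

theorem trapezoid_sub_div_sub_div_eq {K : Type*} [Field K] {x y p : K} (hxy : x + y ≠ 0)
    (hxp : x ≠ p) (hyp : y ≠ p) (c : K) :
    (y - x) / (x + y) * (x * (c / (x - p) ^ 2) + y * (c / (y - p) ^ 2))
        - (c / (x - p) - c / (y - p))
      = c * p * (y - x) ^ 3 / ((x + y) * ((x - p) * (y - p)) ^ 2) := by
  have hxp' : x - p ≠ 0 := sub_ne_zero.2 hxp
  have hyp' : y - p ≠ 0 := sub_ne_zero.2 hyp
  field_simp
  ring

theorem div_sub_div_le_trapezoid {K : Type*} [Field K] [LinearOrder K] [IsStrictOrderedRing K]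
    {x y p c : K} (hadd : 0 < x + y) (hxy : x ≤ y) (hxp : x ≠ p) (hyp : y ≠ p)
    (hcp : 0 ≤ c * p) :
    c / (x - p) - c / (y - p)
      ≤ (y - x) / (x + y) * (x * (c / (x - p) ^ 2) + y * (c / (y - p) ^ 2)) := by
  rw [← sub_nonneg, trapezoid_sub_div_sub_div_eq hadd.ne' hxp hyp]
  exact div_nonneg (mul_nonneg hcp (pow_nonneg (sub_nonneg.2 hxy) 3)) (by positivity)

end Trapezoid

section SecularFunction

variable {ι : Type*} {φ c : ι → ℝ} {z x y : ℝ}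

/-- The secular function `f` with poles `φ m` and weights `c m`. The index type may be infinite; the
value is meaningful at `x` off the poles for which the series is summable. -/
noncomputable def secular (φ c : ι → ℝ) (z x : ℝ) : ℝ :=
  x ^ 2 * ∑' m, c m / (x - φ m) ^ 2 - x + z

/-- The objective `g`, an antiderivative of `x ↦ secular φ c z x / x ^ 2` on positive pole-free
intervals. The index type may be infinite; the value is meaningful at `x > 0` off the poles for
which the series is summable. -/
noncomputable def objective (φ c : ι → ℝ) (z x : ℝ) : ℝ :=
  1 - ∑' m, c m / (x - φ m) - z / x - Real.log x

theorem secular_div_self (hx : x ≠ 0) :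
    secular φ c z x / x = x * ∑' m, c m / (x - φ m) ^ 2 - 1 + z / x := by
  rw [secular]
  field_simp

theorem tsum_div_sub_tsum_div_le_trapezoid (hadd : 0 < x + y) (hxy : x ≤ y)
    (hxφ : ∀ m, x ≠ φ m) (hyφ : ∀ m, y ≠ φ m) (hcφ : ∀ m, 0 ≤ c m * φ m)
    (hx₁ : Summable fun m ↦ c m / (x - φ m)) (hx₂ : Summable fun m ↦ c m / (x - φ m) ^ 2)
    (hy₁ : Summable fun m ↦ c m / (y - φ m)) (hy₂ : Summable fun m ↦ c m / (y - φ m) ^ 2) :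
    ∑' m, c m / (x - φ m) - ∑' m, c m / (y - φ m)
      ≤ (y - x) / (x + y)
        * (x * ∑' m, c m / (x - φ m) ^ 2 + y * ∑' m, c m / (y - φ m) ^ 2) :=
  hasSum_le (fun m ↦ div_sub_div_le_trapezoid hadd hxy (hxφ m) (hyφ m) (hcφ m))
    (hx₁.hasSum.sub hy₁.hasSum)
    (((hx₂.hasSum.mul_left x).add (hy₂.hasSum.mul_left y)).mul_left _)

theorem objective_sub_objective_le (hx : 0 < x) (hxy : x ≤ y)
    (hxφ : ∀ m, x ≠ φ m) (hyφ : ∀ m, y ≠ φ m) (hcφ : ∀ m, 0 ≤ c m * φ m)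
    (hx₁ : Summable fun m ↦ c m / (x - φ m)) (hx₂ : Summable fun m ↦ c m / (x - φ m) ^ 2)
    (hy₁ : Summable fun m ↦ c m / (y - φ m)) (hy₂ : Summable fun m ↦ c m / (y - φ m) ^ 2) :
    objective φ c z y - objective φ c z x
      ≤ (y - x) / (x + y) * (secular φ c z x / x + secular φ c z y / y) := by
  have hy : 0 < y := hx.trans_le hxy
  have hadd : 0 < x + y := add_pos hx hy
  have poles := tsum_div_sub_tsum_div_le_trapezoid hadd hxy hxφ hyφ hcφ hx₁ hx₂ hy₁ hy₂
  have inverse := div_sub_div_eq_trapezoid hx.ne' hy.ne' hadd.ne' z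
  have logarithm := two_mul_sub_div_add_le_log_sub_log hx hxy
  rw [secular_div_self hx.ne', secular_div_self hy.ne', objective, objective]
  linear_combination poles + inverse + logarithm

theorem objective_monotone_roots_same_interval_general (hx : 0 < x) (hxy : x ≤ y)
    (hxφ : ∀ m, x ≠ φ m) (hyφ : ∀ m, y ≠ φ m) (hcφ : ∀ m, 0 ≤ c m * φ m)
    (hx₁ : Summable fun m ↦ c m / (x - φ m)) (hx₂ : Summable fun m ↦ c m / (x - φ m) ^ 2)
    (hy₁ : Summable fun m ↦ c m / (y - φ m)) (hy₂ : Summable fun m ↦ c m / (y - φ m) ^ 2)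
    (hx_root : secular φ c z x = 0) (hy_root : secular φ c z y = 0) :
    objective φ c z y ≤ objective φ c z x := by
  have increment := objective_sub_objective_le (z := z) hx hxy hxφ hyφ hcφ hx₁ hx₂ hy₁ hy₂
  simpa only [hx_root, hy_root, zero_div, add_zero, mul_zero, sub_nonpos] using increment

end SecularFunction

/-- Monotonicity of the objective over roots within one pole-free interval (Lemma 7):
if `0 < λ₁ ≤ λ₂` are roots of the secular function
`f(λ) = λ² Σ_m c_m/(λ - φ_m)² - λ + z` and no pole `φ_m` lies in `[λ₁, λ₂]`, then
`g(λ₁) ≥ g(λ₂)` for the objective `g(λ) = 1 - Σ_m c_m/(λ - φ_m) - z/λ - log λ`. -/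
theorem objective_monotone_roots_same_interval {ι : Type*} [Fintype ι] [Nonempty ι]
    (φ c : ι → ℝ) (hφ : ∀ m, 0 < φ m) (hc : ∀ m, 0 < c m)
    (z : ℝ) (hz : 0 ≤ z)
    (lam₁ lam₂ : ℝ) (h1 : 0 < lam₁) (h12 : lam₁ ≤ lam₂)
    (hroot₁ : lam₁ ^ 2 * ∑ m, c m / (lam₁ - φ m) ^ 2 - lam₁ + z = 0)
    (hroot₂ : lam₂ ^ 2 * ∑ m, c m / (lam₂ - φ m) ^ 2 - lam₂ + z = 0)
    (hpoles : ∀ m, φ m ∉ Set.Icc lam₁ lam₂) :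
    1 - ∑ m, c m / (lam₂ - φ m) - z / lam₂ - Real.log lam₂
      ≤ 1 - ∑ m, c m / (lam₁ - φ m) - z / lam₁ - Real.log lam₁ := by
  have lam₁_ne (m) : lam₁ ≠ φ m := fun h ↦ hpoles m (h ▸ Set.left_mem_Icc.2 h12)
  have lam₂_ne (m) : lam₂ ≠ φ m := fun h ↦ hpoles m (h ▸ Set.right_mem_Icc.2 h12)
  simp only [← tsum_fintype (L := .unconditional ι)] at hroot₁ hroot₂ ⊢
  exact objective_monotone_roots_same_interval_general h1 h12 lam₁_ne lam₂_ne
    (fun m ↦ (mul_pos (hc m) (hφ m)).le) .of_finite .of_finite .of_finite .of_finite hroot₁ hroot₂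
end

section
/- Monotonicity of the objective over roots separated by poles (Lemma 8): if 0 < λ₁ < λ₂, λ₁ ∉ {φ_m : m ∈ S}, λ₂ ∉ {φ_m : m ∈ S}, f(λ₁) = f(λ₂) = 0, and there exists at least one m ∈ S with λ₁ < φ_m < λ₂, then g(λ₁) > g(λ₂). -/
/-!
Write `F x = ∑ c m / (x - φ m)`, so that `-F' x = ∑ c m / (x - φ m) ^ 2`. For a single pole `p`
of weight `w` with `0 ≤ w * p`, the difference of the values of `w / (x - p)` at `a` and `b` is at
most `b - a` times the average of `w / (a - p) ^ 2` and `w / (b - p) ^ 2` with weights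
`a / (a + b)` and `b / (a + b)`. Equality holds for `p = 0`, so `z / x` behaves like one more pole,
located at the origin. The root equation says `x * (-F' x + z / x ^ 2) = 1`; hence `F x + z / x`
drops by at most `2 * (b - a) / (a + b)` from a root `a` to a root `b > a`, and this is less than
`log b - log a`.
-/

section Poles

variable {K : Type*} [Field K] {a b p w : K}

lemma weighted_div_sq_sub_eq (hab : a + b ≠ 0) (hap : a ≠ p) (hbp : b ≠ p) :
    (b - a) / (a + b) * (a * (w / (a - p) ^ 2) + b * (w / (b - p) ^ 2))
        - (w / (a - p) - w / (b - p))
      = w * p * (b - a) ^ 3 / ((a + b) * (a - p) ^ 2 * (b - p) ^ 2) := by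
  have hap' : a - p ≠ 0 := sub_ne_zero.2 hap
  have hbp' : b - p ≠ 0 := sub_ne_zero.2 hbp
  field_simp
  ring

lemma div_sub_div_eq_weighted_div_sq (hab : a + b ≠ 0) (ha : a ≠ 0) (hb : b ≠ 0) :
    w / a - w / b = (b - a) / (a + b) * (a * (w / a ^ 2) + b * (w / b ^ 2)) := by
  have h := weighted_div_sq_sub_eq (w := w) hab ha hb
  simp only [sub_zero, mul_zero, zero_mul, zero_div] at h
  exact (sub_eq_zero.1 h).symm

variable [LinearOrder K] [IsStrictOrderedRing K]

lemma div_sub_sub_div_sub_le_weighted_div_sq (hab : 0 < a + b) (hle : a ≤ b)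
    (hwp : 0 ≤ w * p) (hap : a ≠ p) (hbp : b ≠ p) :
    w / (a - p) - w / (b - p)
      ≤ (b - a) / (a + b) * (a * (w / (a - p) ^ 2) + b * (w / (b - p) ^ 2)) := by
  have : 0 ≤ b - a := sub_nonneg.2 hle
  rw [← sub_nonneg, weighted_div_sq_sub_eq hab.ne' hap hbp]
  positivity

variable [TopologicalSpace K] [IsTopologicalRing K] [OrderClosedTopology K]
  {ι : Type*} {φ c : ι → K} {F₁ F₂ D₁ D₂ : K}

lemma hasSum_sub_le_weighted_div_sq (hab : 0 < a + b) (hle : a ≤ b)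
    (hcφ : ∀ m, 0 ≤ c m * φ m) (ha : ∀ m, a ≠ φ m) (hb : ∀ m, b ≠ φ m)
    (hF₁ : HasSum (fun m ↦ c m / (a - φ m)) F₁) (hF₂ : HasSum (fun m ↦ c m / (b - φ m)) F₂)
    (hD₁ : HasSum (fun m ↦ c m / (a - φ m) ^ 2) D₁)
    (hD₂ : HasSum (fun m ↦ c m / (b - φ m) ^ 2) D₂) :
    F₁ - F₂ ≤ (b - a) / (a + b) * (a * D₁ + b * D₂) :=
  hasSum_le (fun m ↦ div_sub_sub_div_sub_le_weighted_div_sq hab hle (hcφ m) (ha m) (hb m))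
    (hF₁.sub hF₂) (((hD₁.mul_left a).add (hD₂.mul_left b)).mul_left _)

end Poles

lemma two_mul_sub_div_add_lt_log_sub_log {a b : ℝ} (ha : 0 < a) (hab : a < b) :
    2 * (b - a) / (a + b) < Real.log b - Real.log a := by
  have hb : 0 < b := ha.trans hab
  have hratio : 0 < b / a - 1 := sub_pos.2 ((one_lt_div ha).2 hab)
  calc 2 * (b - a) / (a + b) = 2 * (b / a - 1) / (b / a - 1 + 2) := by
        rw [show b / a - 1 + 2 = (a + b) / a by field_simp; ring]
        field_simp
    _ < Real.log (1 + (b / a - 1)) := Real.lt_log_one_add_of_pos hratio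
    _ = Real.log b - Real.log a := by rw [add_sub_cancel, Real.log_div hb.ne' ha.ne']

lemma mul_add_div_sq_eq_one_of_root {K : Type*} [Field K] {x D z : K} (hx : x ≠ 0)
    (hroot : x ^ 2 * D - x + z = 0) : x * D + x * (z / x ^ 2) = 1 := by
  field_simp
  linear_combination hroot

theorem objective_monotone_roots_across_poles_general {ι : Type*} {φ c : ι → ℝ}
    (hcφ : ∀ m, 0 ≤ c m * φ m) {z lam₁ lam₂ F₁ F₂ D₁ D₂ : ℝ}
    (h1 : 0 < lam₁) (h12 : lam₁ < lam₂)
    (hnp₁ : ∀ m, lam₁ ≠ φ m) (hnp₂ : ∀ m, lam₂ ≠ φ m)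
    (hF₁ : HasSum (fun m ↦ c m / (lam₁ - φ m)) F₁)
    (hF₂ : HasSum (fun m ↦ c m / (lam₂ - φ m)) F₂)
    (hD₁ : HasSum (fun m ↦ c m / (lam₁ - φ m) ^ 2) D₁)
    (hD₂ : HasSum (fun m ↦ c m / (lam₂ - φ m) ^ 2) D₂)
    (hroot₁ : lam₁ ^ 2 * D₁ - lam₁ + z = 0) (hroot₂ : lam₂ ^ 2 * D₂ - lam₂ + z = 0) :
    1 - F₂ - z / lam₂ - Real.log lam₂ < 1 - F₁ - z / lam₁ - Real.log lam₁ := by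
  have h2 : 0 < lam₂ := h1.trans h12
  have hadd : 0 < lam₁ + lam₂ := add_pos h1 h2
  have hdecrease : F₁ - F₂ + (z / lam₁ - z / lam₂) < Real.log lam₂ - Real.log lam₁ :=
    calc F₁ - F₂ + (z / lam₁ - z / lam₂)
        ≤ (lam₂ - lam₁) / (lam₁ + lam₂) * (lam₁ * D₁ + lam₂ * D₂)
          + (lam₂ - lam₁) / (lam₁ + lam₂) * (lam₁ * (z / lam₁ ^ 2) + lam₂ * (z / lam₂ ^ 2)) :=
          add_le_add
            (hasSum_sub_le_weighted_div_sq hadd h12.le hcφ hnp₁ hnp₂ hF₁ hF₂ hD₁ hD₂)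
            (div_sub_div_eq_weighted_div_sq hadd.ne' h1.ne' h2.ne').le
      _ = 2 * (lam₂ - lam₁) / (lam₁ + lam₂) := by
          linear_combination (lam₂ - lam₁) / (lam₁ + lam₂) *
            (mul_add_div_sq_eq_one_of_root h1.ne' hroot₁
              + mul_add_div_sq_eq_one_of_root h2.ne' hroot₂)
      _ < Real.log lam₂ - Real.log lam₁ := two_mul_sub_div_add_lt_log_sub_log h1 h12
  linarith

/-- Monotonicity of the objective over roots separated by poles (Lemma 8): if
`0 < λ₁ < λ₂` avoid the poles, both are roots of the secular function
`f(λ) = λ² Σ_m c_m/(λ - φ_m)² - λ + z`, and at least one pole `φ_m` lies strictly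
between `λ₁` and `λ₂`, then `g(λ₁) > g(λ₂)` for the objective
`g(λ) = 1 - Σ_m c_m/(λ - φ_m) - z/λ - log λ`. -/
theorem objective_monotone_roots_across_poles {ι : Type*} [Fintype ι] [Nonempty ι]
    (φ c : ι → ℝ) (hφ : ∀ m, 0 < φ m) (hc : ∀ m, 0 < c m)
    (z : ℝ) (hz : 0 ≤ z)
    (lam₁ lam₂ : ℝ) (h1 : 0 < lam₁) (h12 : lam₁ < lam₂)
    (hnp₁ : ∀ m, lam₁ ≠ φ m) (hnp₂ : ∀ m, lam₂ ≠ φ m)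
    (hroot₁ : lam₁ ^ 2 * ∑ m, c m / (lam₁ - φ m) ^ 2 - lam₁ + z = 0)
    (hroot₂ : lam₂ ^ 2 * ∑ m, c m / (lam₂ - φ m) ^ 2 - lam₂ + z = 0)
    (hsep : ∃ m, lam₁ < φ m ∧ φ m < lam₂) :
    1 - ∑ m, c m / (lam₂ - φ m) - z / lam₂ - Real.log lam₂
      < 1 - ∑ m, c m / (lam₁ - φ m) - z / lam₁ - Real.log lam₁ :=
  objective_monotone_roots_across_poles_general (fun m ↦ (mul_pos (hc m) (hφ m)).le) h1 h12
    hnp₁ hnp₂ (hasSum_fintype _) (hasSum_fintype _) (hasSum_fintype _) (hasSum_fintype _)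
    hroot₁ hroot₂
end
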